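/- Let α = (α_0, …, α_4) ∈ ℂ^5 with α_0 + α_1 + α_2 + α_3 + α_4 = 1, and let f = (f_0, …, f_4) be a holomorphic solution of the A_4^(1) system on an open set U ⊂ ℂ satisfying f_0(t) + f_1(t) + f_2(t) + f_3(t) + f_4(t) = t for all t ∈ U. Define p_1 = f_1, q_1 = f_2, p_2 = f_1 + f_3, q_2 = f_4, and let H(p_1, q_1, p_2, q_2, t) = (t − q_1 − p_1) q_1 p_1 + (t − q_2 − p_2) q_2 p_2 − 2 q_1 p_1 q_2 − α_1 q_1 + α_2 p_1 − (α_1 + α_3) q_2 + α_4 p_2. Then along the solution one has q_1' = ∂H/∂p_1, p_1' = −∂H/∂q_1, q_2' = ∂H/∂p_2 and p_2' = −∂H/∂q_2, where the partial derivatives of H are evaluated at (p_1(t), q_1(t), p_2(t), q_2(t), t). -/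

import Mathlib

/-!
`hamA4` is a polynomial of degree two in each of its four canonical variables, so each partial
derivative can be read off from its coefficients (`deriv_of_eq_quadratic`). After eliminating
`f₀ = t - f₁ - f₂ - f₃ - f₄`, these derivatives coincide with the right-hand sides of the system
for `f₂`, `f₁`, `f₄` and, adding two equations, `f₁ + f₃`.
-/

/-- The polynomial Hamiltonian `H_∅` of the `A₄⁽¹⁾` system in the canonical
coordinates `p₁ = f₁`, `q₁ = f₂`, `p₂ = f₁ + f₃`, `q₂ = f₄`. -/
noncomputable def hamA4 (α : Fin 5 → ℂ) (p1 q1 p2 q2 t : ℂ) : ℂ :=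
  (t - q1 - p1) * q1 * p1 + (t - q2 - p2) * q2 * p2 - 2 * q1 * p1 * q2 -
    α 1 * q1 + α 2 * p1 - (α 1 + α 3) * q2 + α 4 * p2

lemma deriv_of_eq_quadratic {g : ℂ → ℂ} (a b c : ℂ) (hg : ∀ x, g x = a * x ^ 2 + b * x + c)
    (x : ℂ) : deriv g x = 2 * a * x + b := by
  have h : HasDerivAt (fun x : ℂ => a * x ^ 2 + b * x + c) (2 * a * x + b) x :=
    (((((hasDerivAt_id' x).fun_pow 2).const_mul a).add
      ((hasDerivAt_id' x).const_mul b)).add_const c).congr_deriv (by norm_num; ring)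
  rw [funext hg]
  exact h.deriv

/-- A holomorphic solution of the `A₄⁽¹⁾` system normalized by
`f₀ + ⋯ + f₄ = t` satisfies the Hamiltonian system
`qᵢ' = ∂H/∂pᵢ`, `pᵢ' = −∂H/∂qᵢ` for the Hamiltonian `hamA4`, where
`p₁ = f₁`, `q₁ = f₂`, `p₂ = f₁ + f₃`, `q₂ = f₄`. -/
theorem hamiltonian_A4 (α : Fin 5 → ℂ)
    (hα : α 0 + α 1 + α 2 + α 3 + α 4 = 1)
    (U : Set ℂ) (hU : IsOpen U) (f : Fin 5 → ℂ → ℂ)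
    (hf : ∀ j : Fin 5, ∀ t ∈ U,
      HasDerivAt (f j)
        (f j t * (f (j + 1) t - f (j + 2) t + f (j + 3) t - f (j + 4) t) + α j) t)
    (hsum : ∀ t ∈ U, f 0 t + f 1 t + f 2 t + f 3 t + f 4 t = t) :
    ∀ t ∈ U,
      HasDerivAt (f 2)
        (deriv (fun x => hamA4 α x (f 2 t) (f 1 t + f 3 t) (f 4 t) t) (f 1 t)) t ∧
      HasDerivAt (f 1)
        (-deriv (fun x => hamA4 α (f 1 t) x (f 1 t + f 3 t) (f 4 t) t) (f 2 t)) t ∧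
      HasDerivAt (f 4)
        (deriv (fun x => hamA4 α (f 1 t) (f 2 t) x (f 4 t) t) (f 1 t + f 3 t)) t ∧
      HasDerivAt (fun s => f 1 s + f 3 s)
        (-deriv (fun x => hamA4 α (f 1 t) (f 2 t) (f 1 t + f 3 t) x t) (f 4 t)) t := by
  intro t ht
  have h0 : f 0 t = t - f 1 t - f 2 t - f 3 t - f 4 t := by linear_combination hsum t ht
  have h1 : HasDerivAt (f 1) (f 1 t * (f 2 t - f 3 t + f 4 t - f 0 t) + α 1) t := hf 1 t ht
  have h2 : HasDerivAt (f 2) (f 2 t * (f 3 t - f 4 t + f 0 t - f 1 t) + α 2) t := hf 2 t ht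
  have h3 : HasDerivAt (f 3) (f 3 t * (f 4 t - f 0 t + f 1 t - f 2 t) + α 3) t := hf 3 t ht
  have h4 : HasDerivAt (f 4) (f 4 t * (f 0 t - f 1 t + f 2 t - f 3 t) + α 4) t := hf 4 t ht
  rw [h0] at h1 h2 h3 h4
  refine ⟨?_, ?_, ?_, ?_⟩
  · rw [deriv_of_eq_quadratic (-f 2 t) ((t - f 2 t) * f 2 t - 2 * f 2 t * f 4 t + α 2)
      (hamA4 α 0 (f 2 t) (f 1 t + f 3 t) (f 4 t) t)
      (fun x => by unfold hamA4; ring)]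
    exact h2.congr_deriv (by ring)
  · rw [deriv_of_eq_quadratic (-f 1 t) ((t - f 1 t) * f 1 t - 2 * f 1 t * f 4 t - α 1)
      (hamA4 α (f 1 t) 0 (f 1 t + f 3 t) (f 4 t) t)
      (fun x => by unfold hamA4; ring)]
    exact h1.congr_deriv (by ring)
  · rw [deriv_of_eq_quadratic (-f 4 t) ((t - f 4 t) * f 4 t + α 4)
      (hamA4 α (f 1 t) (f 2 t) 0 (f 4 t) t)
      (fun x => by unfold hamA4; ring)]
    exact h4.congr_deriv (by ring)
  · rw [deriv_of_eq_quadratic (-(f 1 t + f 3 t))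
      ((t - (f 1 t + f 3 t)) * (f 1 t + f 3 t) - 2 * f 2 t * f 1 t - (α 1 + α 3))
      (hamA4 α (f 1 t) (f 2 t) (f 1 t + f 3 t) 0 t)
      (fun x => by unfold hamA4; ring)]
    exact (h1.add h3).congr_deriv (by ring)
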